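/- Let {X_t}_{t≥1} be identically distributed, pairwise asymptotically independent positive random variables and {Θ_t}_{t≥1} positive random variables with the sequence {Θ_t} independent of the sequence {X_t}. Suppose X_(∞) = Σ_{t=1}^∞ Θ_t X_t is finite almost surely and has a regularly varying tail of index −α for some α>0, and {Θ_t} satisfies the RW moment conditions for α. Then Σ_{t=1}^∞ P[Θ_t X_t > x] ~ P[X_(∞) > x] as x→∞. -/

import Mathlib

open MeasureTheory ProbabilityTheory Filter Topology
open scoped ENNReal

noncomputable section

/-- A function, positive on `(0,∞)`, is regularly varying at infinity with index `ρ`: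
for every `t > 0`, `f(tx)/f(x) → t^ρ` as `x → ∞`. -/
def RegVarying (f : ℝ → ℝ) (ρ : ℝ) : Prop :=
  (∀ x : ℝ, 0 < x → 0 < f x) ∧
    ∀ t : ℝ, 0 < t → Tendsto (fun x : ℝ => f (t * x) / f x) atTop (nhds (t ^ ρ))

variable {Ω : Type*} [MeasurableSpace Ω]

/-- The (possibly infinite) moment `E[Θ^r]`. -/
def momE (P : Measure Ω) (Θ : Ω → ℝ) (r : ℝ) : ℝ≥0∞ :=
  ∫⁻ ω, ENNReal.ofReal (Θ ω ^ r) ∂P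

/-- The RW moment conditions for the sequence `{Θ_t}` and the index `α`:
if `0 < α < 1`, then `Σ_t E[Θ_t^{α+ε} + Θ_t^{α-ε}] < ∞` for some `ε ∈ (0,α)`;
if `α ≥ 1`, then `Σ_t (E[Θ_t^{α+ε} + Θ_t^{α-ε}])^{1/(α+ε)} < ∞` for some `ε ∈ (0,α)`. -/
def RWConditions (P : Measure Ω) (Θ : ℕ → Ω → ℝ) (α : ℝ) : Prop :=
  ∃ ε : ℝ, 0 < ε ∧ ε < α ∧
    ((α < 1 ∧ (∑' t : ℕ, (momE P (Θ t) (α + ε) + momE P (Θ t) (α - ε))) ≠ ⊤) ∨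
      (1 ≤ α ∧
        (∑' t : ℕ, (momE P (Θ t) (α + ε) + momE P (Θ t) (α - ε)) ^ (1 / (α + ε))) ≠ ⊤))

/-- The tail `P[Z > x]` of a random variable, as a real number. -/
def tailP (P : Measure Ω) (Z : Ω → ℝ) (x : ℝ) : ℝ := (P {ω | x < Z ω}).toReal

/-- `X` and `Y` are asymptotically independent:
`P[X > x, Y > x] / P[X > x] → 0` and `P[X > x, Y > x] / P[Y > x] → 0` as `x → ∞`. -/
def AsympIndep (P : Measure Ω) (X Y : Ω → ℝ) : Prop :=
  Tendsto (fun x : ℝ =>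
      (P {ω | x < X ω ∧ x < Y ω}).toReal / (P {ω | x < X ω}).toReal) atTop (nhds 0) ∧
    Tendsto (fun x : ℝ =>
      (P {ω | x < X ω ∧ x < Y ω}).toReal / (P {ω | x < Y ω}).toReal) atTop (nhds 0)

/-- A Potter-type bound, valid for all `y > 0`, for bounded monotone regularly varying functions. -/
lemma RegVarying.exists_potter_bound {g : ℝ → ℝ} {α β γ : ℝ} (h : RegVarying g (-α))
    (hanti : Antitone g) (hle : ∀ x, g x ≤ 1) (hγ0 : 0 < γ) (hγ : γ < α) (hβ : α < β) :
    ∃ K x₀ : ℝ, 0 < K ∧ 0 < x₀ ∧ ∀ x, x₀ ≤ x → ∀ y, 0 < y →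
      g y ≤ K * ((2 * x / y) ^ β + (2 * x / y) ^ γ) * g x := by
  obtain ⟨hpos, hlim⟩ := h
  have hβ0 : 0 < β := by linarith
  have h2 := hlim 2 two_pos
  have e1 := h2.eventually_lt_const
    (Real.rpow_lt_rpow_of_exponent_lt one_lt_two (neg_lt_neg hγ))
  have e2 := h2.eventually_const_lt
    (Real.rpow_lt_rpow_of_exponent_lt one_lt_two (neg_lt_neg hβ))
  obtain ⟨x₁, hx₁⟩ := eventually_atTop.1 (e1.and e2)
  set x₀ := max x₁ 1 with hx₀
  have hx₀pos : 0 < x₀ := lt_of_lt_of_le one_pos (le_max_right _ _)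
  have step1 : ∀ x, x₀ ≤ x → g (2 * x) ≤ 2 ^ (-γ) * g x := fun x hx => by
    have hgx := hpos x (by linarith)
    have := (hx₁ x (le_trans (le_max_left _ _) hx)).1
    rw [div_lt_iff₀ hgx] at this
    exact this.le
  have step2 : ∀ x, x₀ ≤ x → g x ≤ 2 ^ β * g (2 * x) := fun x hx => by
    have hgx := hpos x (by linarith)
    have := (hx₁ x (le_trans (le_max_left _ _) hx)).2
    rw [lt_div_iff₀ hgx, Real.rpow_neg two_pos.le, inv_mul_lt_iff₀ (by positivity)] at this
    exact this.le
  have one_le_pow2 : ∀ k : ℕ, (1 : ℝ) ≤ 2 ^ k := fun k => one_le_pow₀ one_le_two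
  have up : ∀ (k : ℕ) x, x₀ ≤ x → g (2 ^ k * x) ≤ ((2 ^ k)⁻¹ : ℝ) ^ γ * g x := by
    intro k x hx
    induction k with
    | zero => simp
    | succ k ih =>
      have h1 := step1 (2 ^ k * x) (by nlinarith [one_le_pow2 k])
      have h3 : ((2 ^ (k + 1))⁻¹ : ℝ) ^ γ = 2 ^ (-γ) * ((2 ^ k)⁻¹ : ℝ) ^ γ := by
        rw [pow_succ', mul_inv, Real.mul_rpow (by positivity) (by positivity),
          Real.inv_rpow two_pos.le, Real.rpow_neg two_pos.le]
      rw [h3, pow_succ', mul_assoc, mul_assoc]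
      exact h1.trans (by gcongr)
  have low : ∀ (k : ℕ) x, x₀ ≤ x → g x ≤ ((2 ^ k : ℝ)) ^ β * g (2 ^ k * x) := by
    intro k x hx
    induction k with
    | zero => simp
    | succ k ih =>
      have h1 := step2 (2 ^ k * x) (by nlinarith [one_le_pow2 k])
      have h3 : ((2 ^ (k + 1)) : ℝ) ^ β = ((2 ^ k) : ℝ) ^ β * 2 ^ β := by
        rw [pow_succ, Real.mul_rpow (by positivity) (by positivity)]
      rw [h3, pow_succ', mul_assoc, mul_assoc]
      exact ih.trans (by gcongr)
  have main : ∀ x, x₀ ≤ x → ∀ y, x₀ ≤ y →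
      g y ≤ ((2 * x / y) ^ β + (2 * x / y) ^ γ) * g x := by
    intro x hx y hy
    have hx0 : 0 < x := by linarith
    have hy0 : 0 < y := by linarith
    have hgx := hpos x hx0
    rcases le_total x y with hxy | hxy
    · obtain ⟨k, hk1, hk2⟩ := exists_nat_pow_near ((one_le_div hx0).2 hxy) one_lt_two
      rw [le_div_iff₀ hx0] at hk1
      rw [div_lt_iff₀ hx0] at hk2
      have hq : ((2 ^ k)⁻¹ : ℝ) ≤ 2 * x / y := by
        rw [inv_le_iff_one_le_mul₀ (by positivity), div_mul_eq_mul_div, one_le_div hy0]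
        rw [pow_succ] at hk2
        nlinarith
      calc g y ≤ g (2 ^ k * x) := hanti hk1
        _ ≤ ((2 ^ k)⁻¹ : ℝ) ^ γ * g x := up k x hx
        _ ≤ (2 * x / y) ^ γ * g x := by gcongr
        _ ≤ _ := by
          gcongr
          exact le_add_of_nonneg_left (by positivity)
    · obtain ⟨k, hk1, hk2⟩ := exists_nat_pow_near ((one_le_div hy0).2 hxy) one_lt_two
      rw [le_div_iff₀ hy0] at hk1
      rw [div_lt_iff₀ hy0] at hk2
      have hq : (2 ^ (k + 1) : ℝ) ≤ 2 * x / y := by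
        rw [le_div_iff₀ hy0, pow_succ]
        nlinarith
      calc g y ≤ ((2 ^ (k + 1) : ℝ)) ^ β * g (2 ^ (k + 1) * y) := low (k + 1) y hy
        _ ≤ ((2 ^ (k + 1) : ℝ)) ^ β * g x := by
          gcongr
          exact hanti hk2.le
        _ ≤ (2 * x / y) ^ β * g x := by gcongr
        _ ≤ _ := by
          gcongr
          exact le_add_of_nonneg_right (by positivity)
  have hg0 := hpos x₀ hx₀pos
  refine ⟨1 + (g x₀)⁻¹, x₀, by positivity, hx₀pos, fun x hx y hy => ?_⟩
  have hx0 : 0 < x := by linarith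
  have hgx := hpos x hx0
  rcases le_total x₀ y with hxy | hxy
  · refine (main x hx y hxy).trans ?_
    gcongr
    refine le_mul_of_one_le_left (by positivity) ?_
    simp only [le_add_iff_nonneg_right]
    positivity
  · calc g y ≤ (g x₀)⁻¹ * g x₀ := by rw [inv_mul_cancel₀ hg0.ne']; exact hle y
      _ ≤ (g x₀)⁻¹ * (((2 * x / x₀) ^ β + (2 * x / x₀) ^ γ) * g x) := by
        gcongr
        exact main x hx x₀ le_rfl
      _ = (g x₀)⁻¹ * ((2 * x / x₀) ^ β + (2 * x / x₀) ^ γ) * g x := by ring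
      _ ≤ (1 + (g x₀)⁻¹) * ((2 * x / y) ^ β + (2 * x / y) ^ γ) * g x := by
        gcongr
        linarith

/-- Minkowski's inequality for countable sums of `ℝ≥0∞`-valued functions. -/
lemma lintegral_rpow_tsum_le {μ : Measure Ω} {f : ℕ → Ω → ℝ≥0∞} (hf : ∀ t, Measurable (f t))
    {p : ℝ} (hp : 1 ≤ p) :
    ∫⁻ ω, (∑' t, f t ω) ^ p ∂μ ≤ (∑' t, (∫⁻ ω, f t ω ^ p ∂μ) ^ (1 / p)) ^ p := by
  have hp0 : 0 < p := by linarith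
  have fin : ∀ n : ℕ, (∫⁻ ω, (∑ t ∈ Finset.range n, f t ω) ^ p ∂μ) ^ (1 / p) ≤
      ∑ t ∈ Finset.range n, (∫⁻ ω, f t ω ^ p ∂μ) ^ (1 / p) := by
    intro n
    induction n with
    | zero => simp [ENNReal.zero_rpow_of_pos hp0]; linarith
    | succ n ih =>
      simp only [Finset.sum_range_succ]
      refine le_trans ?_ (add_le_add_left ih _)
      exact ENNReal.lintegral_Lp_add_le (f := fun ω => ∑ t ∈ Finset.range n, f t ω)
        (Finset.measurable_fun_sum _ fun t _ => hf t).aemeasurable (hf n).aemeasurable hp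
  have lim : Tendsto (fun n : ℕ => ∫⁻ ω, (∑ t ∈ Finset.range n, f t ω) ^ p ∂μ) atTop
      (𝓝 (∫⁻ ω, (∑' t, f t ω) ^ p ∂μ)) := by
    refine lintegral_tendsto_of_tendsto_of_monotone ?_ ?_ ?_
    · exact fun n => ((Finset.measurable_fun_sum _ fun t _ => hf t).pow_const p).aemeasurable
    · refine Eventually.of_forall fun ω m n hmn => ?_
      exact ENNReal.rpow_le_rpow
        (Finset.sum_le_sum_of_subset (Finset.range_mono hmn)) hp0.le
    · refine Eventually.of_forall fun ω => ?_
      exact (ENNReal.continuous_rpow_const.tendsto _).comp (ENNReal.tendsto_nat_tsum _)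
  refine le_of_tendsto' lim fun n => ?_
  rw [← ENNReal.rpow_le_rpow_iff (z := 1 / p) (by positivity), ← ENNReal.rpow_mul,
    mul_one_div_cancel hp0.ne', ENNReal.rpow_one]
  exact (fin n).trans (ENNReal.sum_le_tsum _)

/-- The first Bonferroni inequality, summed over ordered pairs. -/
lemma sum_measure_le_measure_biUnion_add {μ : Measure Ω} {A : ℕ → Set Ω}
    (hA : ∀ t, MeasurableSet (A t)) (n : ℕ) :
    ∑ t ∈ Finset.range n, μ (A t) ≤ μ (⋃ t ∈ Finset.range n, A t) +
      ∑ t ∈ Finset.range n, ∑ s ∈ Finset.range t, μ (A s ∩ A t) := by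
  induction n with
  | zero => simp
  | succ n ih =>
    rw [Finset.sum_range_succ, Finset.sum_range_succ, Finset.range_add_one,
      Finset.set_biUnion_insert]
    set U := ⋃ t ∈ Finset.range n, A t with hU
    have hUm : MeasurableSet U := Finset.measurableSet_biUnion _ fun t _ => hA t
    have h1 : μ (A n) ≤ μ (A n \ U) + ∑ s ∈ Finset.range n, μ (A s ∩ A n) := by
      rw [← measure_sdiff_add_inter (A n) hUm]
      gcongr
      refine (measure_mono ?_).trans (measure_biUnion_finset_le _ _)
      intro ω hω
      simp only [hU, Set.mem_inter_iff, Set.mem_iUnion] at hω ⊢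
      obtain ⟨h0, s, hs, h⟩ := hω
      exact ⟨s, hs, h, h0⟩
    have h2 : μ (A n ∪ U) = μ (A n \ U) + μ U := by
      rw [← measure_sdiff_add_inter (A n ∪ U) hUm, Set.union_sdiff_right, Set.union_inter_cancel_right]
    rw [h2]
    calc _ ≤ (μ U + ∑ t ∈ Finset.range n, ∑ s ∈ Finset.range t, μ (A s ∩ A t)) +
          (μ (A n \ U) + ∑ s ∈ Finset.range n, μ (A s ∩ A n)) := add_le_add ih h1
      _ = _ := by ring

/-- If a series exceeds `a + n b + c`, then one of its first `n` terms exceeds `a`, or two of them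
exceed `b`, or the remainder exceeds `c`. -/
lemma exists_lt_of_add_lt_tsum {v : ℕ → ℝ≥0∞} {a b c : ℝ≥0∞} {n : ℕ}
    (h : a + n * b + c < ∑' t, v t) :
    (∃ t ∈ Finset.range n, a < v t) ∨
      (∃ t ∈ Finset.range n, ∃ s ∈ Finset.range t, b < v s ∧ b < v t) ∨
      c < ∑' t, v (t + n) := by
  by_contra! hcon
  obtain ⟨h1, h2, h3⟩ := hcon
  refine absurd h (not_lt.2 ?_)
  rw [← ENNReal.summable.sum_add_tsum_nat_add' (k := n) (f := v)]
  refine add_le_add ?_ h3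
  by_cases hex : ∃ t ∈ Finset.range n, b < v t
  · obtain ⟨t₀, ht₀, hb⟩ := hex
    rw [← Finset.add_sum_erase _ _ ht₀]
    refine add_le_add (h1 t₀ ht₀) ?_
    calc ∑ t ∈ (Finset.range n).erase t₀, v t ≤ ∑ t ∈ (Finset.range n).erase t₀, b := by
          refine Finset.sum_le_sum fun t ht => ?_
          obtain ⟨hne, htn⟩ := Finset.mem_erase.1 ht
          rcases lt_or_gt_of_ne hne with hlt | hlt
          · by_contra! hbt
            exact absurd (h2 t₀ ht₀ t (Finset.mem_range.2 hlt) hbt) (not_le.2 hb)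
          · exact h2 t htn t₀ (Finset.mem_range.2 hlt) hb
      _ ≤ ∑ t ∈ Finset.range n, b := Finset.sum_le_sum_of_subset (Finset.erase_subset _ _)
      _ = n * b := by simp
  · push Not at hex
    calc ∑ t ∈ Finset.range n, v t ≤ ∑ t ∈ Finset.range n, b := Finset.sum_le_sum hex
      _ = n * b := by simp
      _ ≤ a + n * b := le_add_self

/-- The tail of a product of independent random variables is a mixture of tails. -/
lemma measure_lt_mul_eq_lintegral {P : Measure Ω} [IsProbabilityMeasure P] {Z W : Ω → ℝ}
    (hZ : Measurable Z) (hW : Measurable W) (hind : IndepFun Z W P) (hpos : ∀ᵐ ω ∂P, 0 < Z ω)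
    (x : ℝ) :
    P {ω | x < Z ω * W ω} = ∫⁻ ω, P {ω' | x / Z ω < W ω'} ∂P := by
  have hS : MeasurableSet {q : ℝ × ℝ | x < q.1 * q.2} :=
    measurableSet_lt measurable_const (measurable_fst.mul measurable_snd)
  have h1 : P {ω | x < Z ω * W ω} =
      (P.map fun ω => (Z ω, W ω)) {q : ℝ × ℝ | x < q.1 * q.2} := by
    rw [Measure.map_apply (hZ.prodMk hW) hS]
    rfl
  rw [h1, (indepFun_iff_map_prod_eq_prod_map_map hZ.aemeasurable hW.aemeasurable).1 hind,
    Measure.prod_apply hS, lintegral_map (measurable_measure_prodMk_left hS) hZ]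
  refine lintegral_congr_ae ?_
  filter_upwards [hpos] with ω hω
  rw [Measure.map_apply hW (measurable_prodMk_left hS)]
  congr 1
  ext ω'
  simp [div_lt_iff₀' hω]

/-- A power bound on the tail of `Y` below the level `x` bounds the `p`-th moment of the truncation
of `Y` at `x`. -/
lemma lintegral_min_rpow_le {P : Measure Ω} {Y : Ω → ℝ} (hY : Measurable Y)
    (hY0 : ∀ᵐ ω ∂P, 0 ≤ Y ω) {x β p : ℝ} (hx : 0 < x) (hp : 0 < p) (hβp : β < p) {M : ℝ≥0∞}
    (hM : ∀ s, 0 < s → s ≤ x → P {ω | s < Y ω} ≤ M * ENNReal.ofReal ((x / s) ^ β)) :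
    ∫⁻ ω, min (ENNReal.ofReal (Y ω)) (ENNReal.ofReal x) ^ p ∂P ≤
      M * ENNReal.ofReal (p / (p - β)) * ENNReal.ofReal x ^ p := by
  have h1 : ∫⁻ ω, min (ENNReal.ofReal (Y ω)) (ENNReal.ofReal x) ^ p ∂P =
      ∫⁻ ω, ENNReal.ofReal (min (Y ω) x ^ p) ∂P := by
    refine lintegral_congr_ae ?_
    filter_upwards [hY0] with ω hω
    rw [← ENNReal.ofReal_min, ENNReal.ofReal_rpow_of_nonneg (le_min hω hx.le) hp.le]
  have hnn : 0 ≤ᵐ[P] fun ω => min (Y ω) x := by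
    filter_upwards [hY0] with ω hω using le_min hω hx.le
  have hint : IntervalIntegrable (fun s : ℝ => s ^ (p - 1 - β)) volume 0 x :=
    intervalIntegral.intervalIntegrable_rpow' (by linarith)
  have hval : ∫⁻ s in Set.Ioc 0 x, ENNReal.ofReal (s ^ (p - 1 - β)) =
      ENNReal.ofReal (x ^ (p - β) / (p - β)) := by
    rw [← ofReal_integral_eq_lintegral_ofReal
      ((intervalIntegrable_iff_integrableOn_Ioc_of_le hx.le).1 hint),
      ← intervalIntegral.integral_of_le hx.le, integral_rpow (Or.inl (by linarith))]
    · congr 1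
      rw [show p - 1 - β + 1 = p - β by ring, Real.zero_rpow (by linarith), sub_zero]
    · filter_upwards [ae_restrict_mem measurableSet_Ioc] with s hs
      exact Real.rpow_nonneg hs.1.le _
  rw [h1, lintegral_rpow_eq_lintegral_meas_lt_mul P hnn (hY.min measurable_const).aemeasurable hp]
  have h2 : ∫⁻ s in Set.Ioi 0, P {ω | s < min (Y ω) x} * ENNReal.ofReal (s ^ (p - 1)) ≤
      M * ENNReal.ofReal (x ^ β) * ENNReal.ofReal (x ^ (p - β) / (p - β)) := by
    rw [← hval, ← lintegral_const_mul _ (by fun_prop), ← lintegral_indicator measurableSet_Ioi,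
      ← lintegral_indicator measurableSet_Ioc]
    refine lintegral_mono fun s => ?_
    by_cases hs : s ∈ Set.Ioc 0 x
    · have hs0 : 0 < s := hs.1
      rw [Set.indicator_of_mem (Set.mem_Ioi.2 hs0), Set.indicator_of_mem hs]
      calc P {ω | s < min (Y ω) x} * ENNReal.ofReal (s ^ (p - 1))
          ≤ M * ENNReal.ofReal ((x / s) ^ β) * ENNReal.ofReal (s ^ (p - 1)) := by
            gcongr
            have hsub : {ω | s < min (Y ω) x} ⊆ {ω | s < Y ω} :=
              fun ω (hω : s < min (Y ω) x) => (lt_min_iff.1 hω).1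
            exact (measure_mono hsub).trans (hM s hs0 hs.2)
        _ = M * ENNReal.ofReal (x ^ β) * ENNReal.ofReal (s ^ (p - 1 - β)) := by
            rw [mul_assoc, mul_assoc, ← ENNReal.ofReal_mul (by positivity),
              ← ENNReal.ofReal_mul (by positivity), Real.div_rpow hx.le hs0.le,
              Real.rpow_sub hs0 (p - 1) β]
            congr 2
            ring
    · rw [Set.indicator_of_notMem hs]
      by_cases hs0 : s ∈ Set.Ioi (0 : ℝ)
      · have hxs : x < s := by
          by_contra! hcon
          exact hs ⟨hs0, hcon⟩
        have : {ω | s < min (Y ω) x} = ∅ := by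
          ext ω
          simp [hxs.le]
        rw [Set.indicator_of_mem hs0, this]
        simp
      · rw [Set.indicator_of_notMem hs0]
  refine (mul_le_mul_right h2 _).trans (le_of_eq ?_)
  rw [ENNReal.ofReal_rpow_of_pos hx, mul_assoc, mul_assoc, mul_left_comm,
    ← ENNReal.ofReal_mul (by positivity), ← ENNReal.ofReal_mul (by positivity),
    ← ENNReal.ofReal_mul (div_nonneg hp.le (by linarith)), Real.rpow_sub hx]
  congr 2
  have : x ^ β ≠ 0 := by positivity
  field_simp

/-- Superadditivity of `r ↦ r ^ p` for `p ≥ 1`, for series. -/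
lemma ENNReal.tsum_rpow_le_rpow_tsum (a : ℕ → ℝ≥0∞) {p : ℝ} (hp : 1 ≤ p) :
    ∑' t, a t ^ p ≤ (∑' t, a t) ^ p := by
  have hsplit : ∀ b : ℝ≥0∞, b ^ p = b * b ^ (p - 1) := fun b => by
    conv_rhs => rw [← ENNReal.rpow_one b, ← ENNReal.rpow_mul, one_mul,
      ← ENNReal.rpow_add_of_nonneg _ _ zero_le_one (by linarith)]
    congr 1
    ring
  rw [hsplit (∑' t, a t), ← ENNReal.tsum_mul_right]
  refine ENNReal.tsum_le_tsum fun t => ?_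
  rw [hsplit]
  exact mul_le_mul_right (ENNReal.rpow_le_rpow (ENNReal.le_tsum t) (by linarith)) _

/-- Regular variation in terms of `ℝ≥0∞`-valued ratios. -/
lemma RegVarying.tendsto_ennreal_div {G : ℝ → ℝ≥0∞} {ρ : ℝ}
    (h : RegVarying (fun x => (G x).toReal) ρ) (hG : ∀ x, G x ≠ ⊤) {c : ℝ} (hc : 0 < c) :
    Tendsto (fun x => G (c * x) / G x) atTop (𝓝 (ENNReal.ofReal (c ^ ρ))) := by
  refine (ENNReal.tendsto_ofReal (h.2 c hc)).congr' ?_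
  filter_upwards [eventually_gt_atTop 0] with x hx
  rw [ENNReal.ofReal_div_of_pos (h.1 x hx), ENNReal.ofReal_toReal (hG _), ENNReal.ofReal_toReal (hG _)]

/-- Markov's inequality for the remainder of a series of nonnegative random variables, in terms of
the `p`-th moments of the truncated summands. -/
lemma measure_lt_tsum_le_of_lintegral_min_le {P : Measure Ω} {V : ℕ → Ω → ℝ≥0∞}
    (hV : ∀ t, Measurable (V t)) {p : ℝ} (hp : 1 ≤ p) {x : ℝ≥0∞} (hx0 : x ≠ 0) (hxt : x ≠ ⊤)
    {M : ℝ≥0∞} {m : ℕ → ℝ≥0∞}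
    (hm : ∀ t, ∫⁻ ω, min (V t ω) x ^ p ∂P ≤ m t * M * x ^ p) :
    P {ω | x < ∑' t, V t ω} ≤ (∑' t, m t ^ (1 / p)) ^ p * M := by
  have hp0 : 0 < p := by linarith
  have hxp0 : x ^ p ≠ 0 := by simp [hx0, hxt]
  have hxpt : x ^ p ≠ ⊤ := ENNReal.rpow_ne_top_of_nonneg hp0.le hxt
  have hsub : {ω | x < ∑' t, V t ω} ⊆ {ω | x ^ p ≤ (∑' t, min (V t ω) x) ^ p} := by
    intro ω hω
    refine ENNReal.rpow_le_rpow ?_ hp0.le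
    by_cases hex : ∃ t, x ≤ V t ω
    · obtain ⟨t, ht⟩ := hex
      calc x = min (V t ω) x := (min_eq_right ht).symm
        _ ≤ _ := ENNReal.le_tsum (f := fun t => min (V t ω) x) t
    · push Not at hex
      simp only [min_eq_left (hex _).le]
      exact le_of_lt hω
  have hmeas : ∀ t, Measurable fun ω => min (V t ω) x := fun t => (hV t).min measurable_const
  calc P {ω | x < ∑' t, V t ω} ≤ P {ω | x ^ p ≤ (∑' t, min (V t ω) x) ^ p} := measure_mono hsub
    _ ≤ (∫⁻ ω, (∑' t, min (V t ω) x) ^ p ∂P) / x ^ p :=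
      meas_ge_le_lintegral_div
        ((Measurable.tsum hmeas).pow_const p).aemeasurable hxp0 hxpt
    _ ≤ (∑' t, (m t * M * x ^ p) ^ (1 / p)) ^ p / x ^ p := by
      gcongr
      refine (lintegral_rpow_tsum_le hmeas hp).trans ?_
      gcongr with t
      exact hm t
    _ = (∑' t, m t ^ (1 / p)) ^ p * M := by
      simp only [mul_assoc]
      simp only [ENNReal.mul_rpow_of_nonneg _ _ (show 0 ≤ 1 / p by positivity)]
      rw [ENNReal.tsum_mul_right, ENNReal.mul_rpow_of_nonneg _ _ hp0.le,
        ENNReal.mul_rpow_of_nonneg _ _ hp0.le, ← ENNReal.rpow_mul, ← ENNReal.rpow_mul,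
        one_div_mul_cancel hp0.ne', ENNReal.rpow_one, ENNReal.rpow_one, ← mul_assoc,
        ENNReal.mul_div_cancel_right hxp0 hxpt]

/-- Single big jump principle: if the sum of a series of nonnegative random variables has a
regularly varying tail, the summands are pairwise asymptotically independent relative to this tail,
and their truncated moments are summably dominated by it, then the sum of the tails is equivalent
to the tail of the sum. -/
lemma tendsto_tsum_measure_div_measure_tsum {P : Measure Ω} [IsProbabilityMeasure P]
    {V : ℕ → Ω → ℝ≥0∞} (hV : ∀ t, Measurable (V t)) {ρ : ℝ} {G : ℝ → ℝ≥0∞}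
    (hGdef : ∀ x, G x = P {ω | ENNReal.ofReal x < ∑' t, V t ω})
    (hRV : RegVarying (fun x => (G x).toReal) ρ)
    (hJ : ∀ s t, s < t → Tendsto
      (fun x => P ({ω | ENNReal.ofReal x < V s ω} ∩ {ω | ENNReal.ofReal x < V t ω}) / G x)
      atTop (𝓝 0))
    {p : ℝ} (hp : 1 ≤ p) {m : ℕ → ℝ≥0∞} (hm : ∑' t, m t ^ (1 / p) ≠ ⊤)
    {K : ℝ≥0∞} (hK : K ≠ ⊤) {x₀ : ℝ}
    (hmom : ∀ x, x₀ ≤ x → ∀ t, ∫⁻ ω, min (V t ω) (ENNReal.ofReal x) ^ p ∂P ≤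
      m t * (K * G x) * ENNReal.ofReal x ^ p) :
    Tendsto (fun x => (∑' t, P {ω | ENNReal.ofReal x < V t ω}) / G x) atTop (𝓝 1) := by
  have hp0 : 0 < p := by linarith
  have hGt : ∀ x, G x ≠ ⊤ := fun x => by rw [hGdef]; exact measure_ne_top _ _
  have hG0 : ∀ x, 0 < x → G x ≠ 0 := fun x hx h0 => by
    have := hRV.1 x hx
    simp [h0] at this
  have hms : ∀ t x, MeasurableSet {ω | ENNReal.ofReal x < V t ω} := fun t x =>
    measurableSet_lt measurable_const (hV t)
  set r : ℕ → ℝ≥0∞ := fun n => (∑' t, m (t + n) ^ (1 / p)) ^ p with hr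
  have hr0 : Tendsto r atTop (𝓝 0) := by
    have h1 := ENNReal.tendsto_sum_nat_add _ hm
    have h2 := (ENNReal.continuous_rpow_const (y := p)).tendsto 0
    rw [ENNReal.zero_rpow_of_pos hp0] at h2
    exact h2.comp h1
  have hrt : ∀ n, r n ≠ ⊤ := fun n => by
    refine ENNReal.rpow_ne_top_of_nonneg hp0.le (ne_top_of_le_ne_top hm ?_)
    exact ENNReal.tsum_comp_le_tsum_of_injective (add_left_injective n) _
  have htail : ∀ n x, x₀ ≤ x → 0 < x →
      P {ω | ENNReal.ofReal x < ∑' t, V (t + n) ω} ≤ r n * (K * G x) := fun n x hx hx0 =>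
    measure_lt_tsum_le_of_lintegral_min_le (fun t => hV (t + n)) hp
      (by simpa using hx0) ENNReal.ofReal_ne_top (fun t => hmom x hx (t + n))
  have hsingle : ∀ t x, x₀ ≤ x → 0 < x →
      P {ω | ENNReal.ofReal x < V t ω} ≤ m t * (K * G x) := fun t x hx hx0 => by
    have hxp0 : ENNReal.ofReal x ^ p ≠ 0 := by simp [hx0]
    have hxpt : ENNReal.ofReal x ^ p ≠ ⊤ :=
      ENNReal.rpow_ne_top_of_nonneg hp0.le ENNReal.ofReal_ne_top
    calc P {ω | ENNReal.ofReal x < V t ω}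
        ≤ P {ω | ENNReal.ofReal x ^ p ≤ min (V t ω) (ENNReal.ofReal x) ^ p} :=
          measure_mono fun ω hω => ENNReal.rpow_le_rpow (le_min (le_of_lt hω) le_rfl) hp0.le
      _ ≤ (∫⁻ ω, min (V t ω) (ENNReal.ofReal x) ^ p ∂P) / ENNReal.ofReal x ^ p :=
          meas_ge_le_lintegral_div
            (((hV t).min measurable_const).pow_const p).aemeasurable hxp0 hxpt
      _ ≤ _ := by
          rw [ENNReal.div_le_iff hxp0 hxpt]
          exact hmom x hx t
  have hmr : ∀ n, ∑' t, m (t + n) ≤ r n := fun n => by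
    have := ENNReal.tsum_rpow_le_rpow_tsum (fun t => m (t + n) ^ (1 / p)) hp
    simpa only [← ENNReal.rpow_mul, one_div_mul_cancel hp0.ne', ENNReal.rpow_one] using this
  set J : ℕ → ℕ → ℝ → ℝ≥0∞ := fun s t x =>
    P ({ω | ENNReal.ofReal x < V s ω} ∩ {ω | ENNReal.ofReal x < V t ω}) with hJdef
  set D : ℝ → ℝ≥0∞ := fun x => ∑' t, P {ω | ENNReal.ofReal x < V t ω} with hD
  have hJsum : ∀ n, Tendsto
      (fun x => (∑ t ∈ Finset.range n, ∑ s ∈ Finset.range t, J s t x) / G x) atTop (𝓝 0) := by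
    intro n
    have : Tendsto (fun x => ∑ t ∈ Finset.range n, ∑ s ∈ Finset.range t, J s t x / G x) atTop
        (𝓝 (∑ t ∈ Finset.range n, ∑ s ∈ Finset.range t, 0)) :=
      tendsto_finsetSum _ fun t _ => tendsto_finsetSum _ fun s hs =>
        hJ s t (Finset.mem_range.1 hs)
    simpa only [div_eq_mul_inv, Finset.sum_mul, Finset.sum_const_zero] using this
  refine tendsto_of_le_liminf_of_limsup_le ?_ ?_
  · have key : ∀ c : ℝ, 0 < c → c < 1 →
        ENNReal.ofReal (c⁻¹ ^ ρ) ≤ liminf (fun x => D x / G x) atTop := by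
      intro c hc0 hc1
      set δ := (1 - c) / 2 with hδ
      have hδ0 : 0 < δ := by rw [hδ]; linarith
      have hn : ∀ n : ℕ, ENNReal.ofReal (c⁻¹ ^ ρ) -
          r n * (K * ENNReal.ofReal ((δ * c⁻¹) ^ ρ)) ≤ liminf (fun x => D x / G x) atTop := by
        intro n
        set κ : ℝ := δ * c⁻¹ / (n + 1) with hκ
        have hκ0 : 0 < κ := by positivity
        have hδc : 0 < δ * c⁻¹ := by positivity
        have t1 := hRV.tendsto_ennreal_div hGt (inv_pos.2 hc0)
        have t2 := hRV.tendsto_ennreal_div hGt hκ0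
        have t3 := hRV.tendsto_ennreal_div hGt hδc
        have t4 := (hJsum n).comp (tendsto_id.const_mul_atTop hκ0)
        have t5 := ENNReal.Tendsto.mul t4 (Or.inr ENNReal.ofReal_ne_top) t2
          (Or.inr ENNReal.zero_ne_top)
        have t6 : Tendsto (fun y => r n * (K * (G (δ * c⁻¹ * y) / G y))) atTop
            (𝓝 (r n * (K * ENNReal.ofReal ((δ * c⁻¹) ^ ρ)))) :=
          ENNReal.Tendsto.const_mul (ENNReal.Tendsto.const_mul t3 (Or.inr hK)) (Or.inr (hrt n))
        have t7 := ENNReal.Tendsto.sub t1 (t5.add t6) (Or.inl ENNReal.ofReal_ne_top)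
        rw [zero_mul, zero_add] at t7
        rw [← t7.liminf_eq]
        refine liminf_le_liminf ?_
        filter_upwards [eventually_gt_atTop 0, eventually_ge_atTop (x₀ / (δ * c⁻¹))] with y hy0 hy
        rw [div_le_iff₀' hδc] at hy
        have hκy : 0 < κ * y := by positivity
        have main : G (c⁻¹ * y) ≤ D y +
            (∑ t ∈ Finset.range n, ∑ s ∈ Finset.range t, J s t (κ * y) +
              r n * (K * G (δ * c⁻¹ * y))) := by
          have hle : ENNReal.ofReal y + n * ENNReal.ofReal (κ * y) +
              ENNReal.ofReal (δ * c⁻¹ * y) ≤ ENNReal.ofReal (c⁻¹ * y) := by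
            rw [← ENNReal.ofReal_natCast, ← ENNReal.ofReal_mul (by positivity),
              ← ENNReal.ofReal_add (by positivity) (by positivity),
              ← ENNReal.ofReal_add (by positivity) (by positivity)]
            apply ENNReal.ofReal_le_ofReal
            have e1 : (n : ℝ) * (κ * y) ≤ δ * c⁻¹ * y := by
              rw [hκ, div_mul_eq_mul_div, mul_div_assoc', div_le_iff₀ (by positivity)]
              nlinarith [mul_pos hδc hy0]
            have e2 : y + δ * c⁻¹ * y + δ * c⁻¹ * y = c⁻¹ * y := by
              rw [hδ]
              field_simp
              ring
            linarith
          have hsub : {ω | ENNReal.ofReal (c⁻¹ * y) < ∑' t, V t ω} ⊆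
              (⋃ t ∈ Finset.range n, {ω | ENNReal.ofReal y < V t ω}) ∪
              ((⋃ t ∈ Finset.range n, ⋃ s ∈ Finset.range t,
                ({ω | ENNReal.ofReal (κ * y) < V s ω} ∩ {ω | ENNReal.ofReal (κ * y) < V t ω})) ∪
              {ω | ENNReal.ofReal (δ * c⁻¹ * y) < ∑' t, V (t + n) ω}) := by
            intro ω hω
            simpa only [Set.mem_union, Set.mem_iUnion, Set.mem_inter_iff, Set.mem_ofPred_eq,
              exists_prop] using exists_lt_of_add_lt_tsum (hle.trans_lt hω)
          rw [hGdef]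
          refine (measure_mono hsub).trans ?_
          refine (measure_union_le _ _).trans (add_le_add ?_ ?_)
          · exact (measure_biUnion_finset_le _ _).trans (ENNReal.sum_le_tsum _)
          · refine (measure_union_le _ _).trans (add_le_add ?_ ?_)
            · refine (measure_biUnion_finset_le _ _).trans (Finset.sum_le_sum fun t _ => ?_)
              exact measure_biUnion_finset_le _ _
            · exact htail n _ hy (by positivity)
        simp only [Function.comp, id]
        set Q := ∑ t ∈ Finset.range n, ∑ s ∈ Finset.range t, J s t (κ * y)
        rw [tsub_le_iff_right, ← mul_div_assoc, ENNReal.div_mul_cancel (hG0 _ hκy) (hGt _)]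
        calc G (c⁻¹ * y) / G y
            ≤ (D y + (Q + r n * (K * G (δ * c⁻¹ * y)))) / G y := by gcongr
          _ = D y / G y + (Q / G y + r n * (K * (G (δ * c⁻¹ * y) / G y))) := by
            rw [ENNReal.add_div, ENNReal.add_div]
            simp only [mul_div_assoc]
      refine le_of_tendsto' (x := atTop) ?_ hn
      have hC : K * ENNReal.ofReal ((δ * c⁻¹) ^ ρ) ≠ ⊤ :=
        ENNReal.mul_ne_top hK ENNReal.ofReal_ne_top
      have h1 := ENNReal.Tendsto.sub (tendsto_const_nhds (x := ENNReal.ofReal (c⁻¹ ^ ρ)))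
        (ENNReal.Tendsto.mul_const hr0 (Or.inr hC)) (Or.inl ENNReal.ofReal_ne_top)
      simpa using h1
    have hc : ContinuousAt (fun c : ℝ => ENNReal.ofReal (c⁻¹ ^ ρ)) 1 :=
      ENNReal.continuous_ofReal.continuousAt.comp
        ((continuousAt_inv₀ one_ne_zero).rpow_const (Or.inl (by norm_num)))
    have hlim : Tendsto (fun c : ℝ => ENNReal.ofReal (c⁻¹ ^ ρ)) (𝓝[<] 1) (𝓝 1) := by
      have := hc.tendsto
      simp only [inv_one, Real.one_rpow, ENNReal.ofReal_one] at this
      exact this.mono_left nhdsWithin_le_nhds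
    refine le_of_tendsto hlim ?_
    filter_upwards [Ioo_mem_nhdsLT (zero_lt_one' ℝ)] with c hc using key c hc.1 hc.2
  · have hn : ∀ n : ℕ, limsup (fun x => D x / G x) atTop ≤ 1 + 0 + r n * K := by
      intro n
      have t1 : Tendsto (fun x => 1 + (∑ t ∈ Finset.range n, ∑ s ∈ Finset.range t, J s t x) / G x
          + r n * K) atTop (𝓝 (1 + 0 + r n * K)) :=
        (tendsto_const_nhds.add (hJsum n)).add tendsto_const_nhds
      rw [← t1.limsup_eq]
      refine limsup_le_limsup ?_
      filter_upwards [eventually_gt_atTop 0, eventually_ge_atTop x₀] with x hx0 hx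
      have h1 : D x ≤ G x + (∑ t ∈ Finset.range n, ∑ s ∈ Finset.range t, J s t x) +
          r n * (K * G x) := by
        rw [hD]
        simp only
        rw [← ENNReal.summable.sum_add_tsum_nat_add' (k := n)]
        refine add_le_add ((sum_measure_le_measure_biUnion_add (fun t => hms t x) n).trans ?_) ?_
        · refine add_le_add_left ?_ _
          rw [hGdef]
          refine measure_mono fun ω hω => ?_
          simp only [Set.mem_iUnion] at hω
          obtain ⟨t, _, h⟩ := hω
          exact lt_of_lt_of_le h (ENNReal.le_tsum (f := fun t => V t ω) t)
        · calc _ ≤ ∑' t, m (t + n) * (K * G x) :=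
                ENNReal.tsum_le_tsum fun t => hsingle (t + n) x hx hx0
            _ ≤ _ := by
                rw [ENNReal.tsum_mul_right]
                gcongr
                exact hmr n
      rw [ENNReal.div_le_iff (hG0 x hx0) (hGt x), add_mul, add_mul, one_mul,
        ENNReal.div_mul_cancel (hG0 x hx0) (hGt x), mul_assoc]
      exact h1
    refine ge_of_tendsto' (x := atTop) ?_ hn
    have := ENNReal.Tendsto.mul_const (b := K) hr0 (Or.inr hK)
    have h2 := this.const_add 1
    simpa using h2

/-- The weight `u ^ β + u ^ γ` of Potter's bound, as an extended nonnegative real. -/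
def potterWeight (β γ u : ℝ) : ℝ≥0∞ := ENNReal.ofReal (u ^ β) + ENNReal.ofReal (u ^ γ)

lemma measurable_potterWeight (β γ : ℝ) : Measurable (potterWeight β γ) := by
  unfold potterWeight
  fun_prop

lemma potterWeight_ne_top (β γ u : ℝ) : potterWeight β γ u ≠ ⊤ := by simp [potterWeight]

lemma potterWeight_le_mul {β γ c u : ℝ} (hc : 0 ≤ c) (hu : 0 ≤ u) :
    potterWeight β γ (c * u) ≤ potterWeight β γ c * potterWeight β γ u := by
  unfold potterWeight
  rw [Real.mul_rpow hc hu, Real.mul_rpow hc hu, ENNReal.ofReal_mul (by positivity),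
    ENNReal.ofReal_mul (by positivity), add_mul, mul_add, mul_add]
  exact add_le_add le_self_add le_add_self

lemma potterWeight_mul_le {β γ c u : ℝ} (hγβ : γ ≤ β) (hc : 1 ≤ c) (hu : 0 ≤ u) :
    potterWeight β γ (c * u) ≤ ENNReal.ofReal (c ^ β) * potterWeight β γ u := by
  have hc0 : 0 ≤ c := by linarith
  unfold potterWeight
  rw [Real.mul_rpow hc0 hu, Real.mul_rpow hc0 hu, ENNReal.ofReal_mul (by positivity),
    ENNReal.ofReal_mul (by positivity), mul_add]
  gcongr

/-- Under the RW moment conditions, the weights are summable in `L^p` type for some `p ≥ 1` and some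
pair of exponents around `α` smaller than `p`. -/
lemma RWConditions.exists_exponents {P : Measure Ω} {Θ : ℕ → Ω → ℝ} {α : ℝ}
    (h : RWConditions P Θ α) (hΘ : ∀ t, Measurable (Θ t)) (hpos : ∀ t, ∀ᵐ ω ∂P, 0 < Θ t ω) :
    ∃ p β γ : ℝ, 1 ≤ p ∧ 0 < γ ∧ γ < α ∧ α < β ∧ β < p ∧
      ∑' t, (∫⁻ ω, potterWeight β γ (Θ t ω) ∂P) ^ (1 / p) ≠ ⊤ := by
  obtain ⟨ε, hε0, hεα, h⟩ := h
  have rpow_le : ∀ {u a : ℝ}, 0 < u → α - ε ≤ a → a ≤ α + ε →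
      u ^ a ≤ u ^ (α + ε) + u ^ (α - ε) := by
    intro u a hu h1 h2
    rcases le_total 1 u with hu1 | hu1
    · exact (Real.rpow_le_rpow_of_exponent_le hu1 h2).trans
        (le_add_of_nonneg_right (by positivity))
    · exact (Real.rpow_le_rpow_of_exponent_ge hu hu1 h1).trans
        (le_add_of_nonneg_left (by positivity))
  have mom_le : ∀ {η : ℝ}, 0 < η → η ≤ ε → ∀ t,
      ∫⁻ ω, potterWeight (α + η) (α - η) (Θ t ω) ∂P ≤
        2 * (momE P (Θ t) (α + ε) + momE P (Θ t) (α - ε)) := by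
    intro η hη0 hηε t
    have hm : ∀ r : ℝ, Measurable fun ω => ENNReal.ofReal (Θ t ω ^ r) := fun r =>
      ((hΘ t).pow_const r).ennreal_ofReal
    unfold momE
    rw [← lintegral_add_left (hm _), ← lintegral_const_mul _ (by fun_prop)]
    refine lintegral_mono_ae ?_
    filter_upwards [hpos t] with ω hω
    unfold potterWeight
    have h1 := Real.rpow_nonneg hω.le (α + ε)
    have h2 := Real.rpow_nonneg hω.le (α - ε)
    rw [two_mul, ← ENNReal.ofReal_add h1 h2]
    refine add_le_add (ENNReal.ofReal_le_ofReal (rpow_le hω ?_ ?_))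
      (ENNReal.ofReal_le_ofReal (rpow_le hω ?_ ?_)) <;> linarith
  have sum_le : ∀ {η p : ℝ}, 0 < η → η ≤ ε → 0 < p →
      ∑' t, (momE P (Θ t) (α + ε) + momE P (Θ t) (α - ε)) ^ (1 / p) ≠ ⊤ →
      ∑' t, (∫⁻ ω, potterWeight (α + η) (α - η) (Θ t ω) ∂P) ^ (1 / p) ≠ ⊤ := by
    intro η p hη0 hηε hp hfin
    have hp' : 0 ≤ 1 / p := by positivity
    refine ne_top_of_le_ne_top (ENNReal.mul_ne_top
      (ENNReal.rpow_ne_top_of_nonneg hp' (ENNReal.ofNat_ne_top (n := 2))) hfin) ?_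
    rw [← ENNReal.tsum_mul_left]
    refine ENNReal.tsum_le_tsum fun t => ?_
    rw [← ENNReal.mul_rpow_of_nonneg _ _ hp']
    exact ENNReal.rpow_le_rpow (mom_le hη0 hηε t) hp'
  rcases h with ⟨hα1, h⟩ | ⟨hα1, h⟩
  · have hη : 0 < min ε ((1 - α) / 2) := lt_min hε0 (by linarith)
    have hη1 : min ε ((1 - α) / 2) ≤ ε := min_le_left _ _
    have hη2 : min ε ((1 - α) / 2) ≤ (1 - α) / 2 := min_le_right _ _
    refine ⟨1, α + min ε ((1 - α) / 2), α - min ε ((1 - α) / 2), le_rfl, by linarith, by linarith,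
      by linarith, by linarith, sum_le hη hη1 one_pos ?_⟩
    simpa using h
  · exact ⟨α + ε, α + ε / 2, α - ε / 2, by linarith, by linarith, by linarith, by linarith,
      by linarith, sum_le (by linarith) (by linarith) (by linarith) h⟩

/-- A tail dominated by a regularly varying tail inherits Potter's bound. -/
lemma RegVarying.exists_tail_le {F G : ℝ → ℝ≥0∞} {α β γ : ℝ}
    (h : RegVarying (fun x => (G x).toReal) (-α)) (hanti : Antitone G) (hle : ∀ x, G x ≤ 1)
    (hγ0 : 0 < γ) (hγ : γ < α) (hβ : α < β) {q : ℝ≥0∞} (hq0 : q ≠ 0) (hq : q ≠ ⊤) {c : ℝ}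
    (hc : 0 < c) (hFG : ∀ y, 0 < y → q * F y ≤ G (c * y)) :
    ∃ K x₀, K ≠ ⊤ ∧ 0 < x₀ ∧ ∀ x, x₀ ≤ x → ∀ y, 0 < y →
      F y ≤ K * potterWeight β γ (x / y) * G x := by
  have hGt : ∀ x, G x ≠ ⊤ := fun x => ne_top_of_le_ne_top ENNReal.one_ne_top (hle x)
  obtain ⟨K, x₀, hK, hx₀, hmain⟩ := h.exists_potter_bound
    (fun x y hxy => ENNReal.toReal_mono (hGt x) (hanti hxy))
    (fun x => ENNReal.toReal_le_of_le_ofReal zero_le_one (by simpa using hle x)) hγ0 hγ hβ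
  refine ⟨q⁻¹ * (ENNReal.ofReal K * potterWeight β γ (2 / c)), x₀,
    ENNReal.mul_ne_top (ENNReal.inv_ne_top.2 hq0)
      (ENNReal.mul_ne_top ENNReal.ofReal_ne_top (potterWeight_ne_top _ _ _)), hx₀,
    fun x hx y hy => ?_⟩
  have hx0 : 0 < x := by linarith
  have h1 : G (c * y) ≤ ENNReal.ofReal K * potterWeight β γ (2 / c * (x / y)) * G x := by
    have := hmain x hx (c * y) (by positivity)
    rw [← ENNReal.ofReal_toReal (hGt (c * y)), ← ENNReal.ofReal_toReal (hGt x)]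
    refine (ENNReal.ofReal_le_ofReal this).trans (le_of_eq ?_)
    rw [ENNReal.ofReal_mul (by positivity), ENNReal.ofReal_mul hK.le,
      ENNReal.ofReal_add (by positivity) (by positivity), potterWeight,
      div_mul_div_comm]
  calc F y = q⁻¹ * (q * F y) := by
        rw [← mul_assoc, ENNReal.inv_mul_cancel hq0 hq, one_mul]
    _ ≤ q⁻¹ * (ENNReal.ofReal K * (potterWeight β γ (2 / c) * potterWeight β γ (x / y)) * G x) := by
        refine mul_le_mul_right ((hFG y hy).trans (h1.trans ?_)) _
        gcongr
        exact potterWeight_le_mul (by positivity) (by positivity)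
    _ = _ := by ring

/-- The tail of `Z W` is negligible with respect to `G` when `Z > 0` has a finite Potter moment and
is independent of `W`, and the tail of `W` is negligible with respect to a tail `F` satisfying a
Potter bound relative to `G`. -/
lemma tendsto_measure_lt_mul_div {P : Measure Ω} [IsProbabilityMeasure P] {Z W : Ω → ℝ}
    (hZ : Measurable Z) (hW : Measurable W) (hind : IndepFun Z W P) (hpos : ∀ᵐ ω ∂P, 0 < Z ω)
    {F G : ℝ → ℝ≥0∞} {β γ x₀ : ℝ} {K : ℝ≥0∞} (hK : K ≠ ⊤) (hF : ∀ y, F y ≠ ⊤)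
    (hG0 : ∀ x, 0 < x → G x ≠ 0) (hGt : ∀ x, G x ≠ ⊤)
    (hFG : ∀ x, x₀ ≤ x → ∀ y, 0 < y → F y ≤ K * potterWeight β γ (x / y) * G x)
    (hWF : ∀ y, P {ω | y < W ω} ≤ F y)
    (hlim : Tendsto (fun y => P {ω | y < W ω} / F y) atTop (𝓝 0))
    (hmom : ∫⁻ ω, potterWeight β γ (Z ω) ∂P ≠ ⊤) :
    Tendsto (fun x => P {ω | x < Z ω * W ω} / G x) atTop (𝓝 0) := by
  set H : ℝ → ℝ≥0∞ := fun y => P {ω | y < W ω} with hH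
  have hHanti : Antitone H := fun a b hab =>
    measure_mono fun ω (hω : b < W ω) => lt_of_le_of_lt hab hω
  have hrw : ∀ x, P {ω | x < Z ω * W ω} / G x = ∫⁻ ω, H (x / Z ω) / G x ∂P := fun x => by
    have hHm : Measurable fun ω => H (x / Z ω) :=
      hHanti.measurable.comp (measurable_const.div hZ)
    simp only [div_eq_mul_inv (H _), lintegral_mul_const _ hHm]
    rw [measure_lt_mul_eq_lintegral hZ hW hind hpos, div_eq_mul_inv]
  have hbound : ∀ x, x₀ ≤ x → 0 < x → ∀ z, 0 < z → F (x / z) / G x ≤ K * potterWeight β γ z := by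
    intro x hx hx0 z hz
    rw [ENNReal.div_le_iff (hG0 x hx0) (hGt x)]
    have := hFG x hx (x / z) (by positivity)
    rwa [div_div_cancel₀ hx0.ne'] at this
  simp only [hrw]
  rw [← lintegral_zero (μ := P)]
  refine tendsto_lintegral_filter_of_dominated_convergence
    (fun ω => K * potterWeight β γ (Z ω)) ?_ ?_ ?_ ?_
  · exact Eventually.of_forall fun x =>
      (hHanti.measurable.comp (measurable_const.div hZ)).div_const _
  · filter_upwards [eventually_ge_atTop x₀, eventually_gt_atTop 0] with x hx hx0
    filter_upwards [hpos] with ω hω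
    exact (ENNReal.div_le_div_right (hWF _) _).trans (hbound x hx hx0 _ hω)
  · have hm : Measurable fun ω => potterWeight β γ (Z ω) := (measurable_potterWeight β γ).comp hZ
    rw [lintegral_const_mul _ hm]
    exact ENNReal.mul_ne_top hK hmom
  · filter_upwards [hpos] with ω hω
    have h1 := hlim.comp (tendsto_id.atTop_div_const hω)
    have h2 := ENNReal.Tendsto.mul_const (b := K * potterWeight β γ (Z ω)) h1
      (Or.inr (ENNReal.mul_ne_top hK (potterWeight_ne_top _ _ _)))
    rw [zero_mul] at h2
    refine tendsto_of_tendsto_of_tendsto_of_le_of_le' tendsto_const_nhds h2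
      (Eventually.of_forall fun _ => zero_le) ?_
    filter_upwards [eventually_ge_atTop x₀, eventually_gt_atTop 0] with x hx hx0
    simp only [Function.comp, id]
    rcases eq_or_ne (F (x / Z ω)) 0 with h0 | h0
    · have : H (x / Z ω) = 0 := le_antisymm (h0 ▸ hWF _) zero_le
      simp [this]
    · calc H (x / Z ω) / G x = H (x / Z ω) / F (x / Z ω) * (F (x / Z ω) / G x) := by
            rw [← mul_div_assoc, ENNReal.div_mul_cancel h0 (hF _)]
        _ ≤ _ := by
            gcongr
            exact hbound x hx hx0 _ hω

/-- Truncated moments of a product of independent variables, when the tail `F` of the second factor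
satisfies a Potter bound relative to `G`. -/
lemma lintegral_min_mul_rpow_le {P : Measure Ω} [IsProbabilityMeasure P] {Z W : Ω → ℝ}
    (hZ : Measurable Z) (hW : Measurable W) (hind : IndepFun Z W P) (hZ0 : ∀ᵐ ω ∂P, 0 < Z ω)
    (hW0 : ∀ᵐ ω ∂P, 0 < W ω) {β γ p x : ℝ} (hγβ : γ ≤ β) (hβp : β < p) (hp : 0 < p) (hx : 0 < x)
    {M : ℝ≥0∞}
    (hM : ∀ y, 0 < y → P {ω | y < W ω} ≤ M * potterWeight β γ (x / y)) :
    ∫⁻ ω, min (ENNReal.ofReal (Z ω * W ω)) (ENNReal.ofReal x) ^ p ∂P ≤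
      M * (∫⁻ ω, potterWeight β γ (Z ω) ∂P) * ENNReal.ofReal (p / (p - β)) *
        ENNReal.ofReal x ^ p := by
  refine lintegral_min_rpow_le (hZ.mul hW) ?_ hx hp hβp fun s hs hsx => ?_
  · filter_upwards [hZ0, hW0] with ω h1 h2 using (mul_pos h1 h2).le
  have hm : Measurable fun ω => potterWeight β γ (Z ω) := (measurable_potterWeight β γ).comp hZ
  change P {ω | s < Z ω * W ω} ≤ _
  rw [measure_lt_mul_eq_lintegral hZ hW hind hZ0, mul_right_comm, ← lintegral_const_mul _ hm]
  refine lintegral_mono_ae ?_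
  filter_upwards [hZ0] with ω hω
  refine (hM _ (by positivity)).trans ?_
  rw [mul_assoc, show x / (s / Z ω) = x / s * Z ω by field_simp]
  gcongr
  exact potterWeight_mul_le hγβ ((one_le_div hs).2 hsx) hω.le

/-- A positive random variable exceeds some positive level with positive probability. -/
lemma exists_pos_measure_lt_ne_zero {P : Measure Ω} [IsProbabilityMeasure P] {Z : Ω → ℝ}
    (hZ : ∀ᵐ ω ∂P, 0 < Z ω) : ∃ c, 0 < c ∧ P {ω | c < Z ω} ≠ 0 := by
  by_contra! hcon
  have h0 : P (⋃ n : ℕ, {ω | 1 / ((n : ℝ) + 1) < Z ω}) = 0 :=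
    measure_iUnion_null fun n => hcon _ (by positivity)
  have h1 : ∀ᵐ ω ∂P, ω ∈ ⋃ n : ℕ, {ω | 1 / ((n : ℝ) + 1) < Z ω} := by
    filter_upwards [hZ] with ω hω
    obtain ⟨n, hn⟩ := exists_nat_one_div_lt hω
    exact Set.mem_iUnion.2 ⟨n, hn⟩
  have h2 : ∀ᵐ ω ∂P, False := by
    filter_upwards [h1, measure_eq_zero_iff_ae_notMem.1 h0] with ω h3 h4 using h4 h3
  exact h2.exists.choose_spec

/-- Asymptotic independence in terms of `ℝ≥0∞`-valued ratios. -/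
lemma AsympIndep.tendsto_ennreal_div {P : Measure Ω} [IsProbabilityMeasure P] {X Y : Ω → ℝ}
    (h : AsympIndep P X Y) :
    Tendsto (fun x => P {ω | x < min (X ω) (Y ω)} / P {ω | x < X ω}) atTop (𝓝 0) := by
  have h1 := ENNReal.tendsto_ofReal h.1
  rw [ENNReal.ofReal_zero] at h1
  refine h1.congr fun x => ?_
  have hsub : {ω | x < X ω ∧ x < Y ω} ⊆ {ω | x < X ω} := fun ω hω => hω.1
  have hle : P {ω | x < X ω ∧ x < Y ω} / P {ω | x < X ω} ≤ 1 :=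
    ENNReal.div_le_of_le_mul (by simpa using measure_mono hsub)
  rw [← ENNReal.toReal_div, ENNReal.ofReal_toReal (ne_top_of_le_ne_top ENNReal.one_ne_top hle)]
  simp only [lt_min_iff]

/-- Proposition 4.4: if the `X_t` are identically distributed, pairwise asymptotically
independent and positive, the positive weights `Θ_t` (independent of `{X_t}`) satisfy the
RW moment conditions, and `X_(∞) = Σ_t Θ_t X_t` is finite a.s. with a regularly varying
tail of index `-α`, then `Σ_t P[Θ_t X_t > x] ~ P[X_(∞) > x]` as `x → ∞`. -/
theorem stmt2 {Ω : Type*} [MeasurableSpace Ω] (P : Measure Ω) [IsProbabilityMeasure P]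
    (X Θ : ℕ → Ω → ℝ) (α : ℝ) (hα : 0 < α)
    (hXmeas : ∀ t, Measurable (X t)) (hΘmeas : ∀ t, Measurable (Θ t))
    (hXpos : ∀ t, ∀ᵐ ω ∂P, 0 < X t ω) (hΘpos : ∀ t, ∀ᵐ ω ∂P, 0 < Θ t ω)
    (hident : ∀ t, IdentDistrib (X t) (X 0) P P)
    (hpair : ∀ s t : ℕ, s ≠ t → AsympIndep P (X s) (X t))
    (hindep : IndepFun (fun ω => fun t => Θ t ω) (fun ω => fun t => X t ω) P)
    (hfin : ∀ᵐ ω ∂P, (∑' t : ℕ, ENNReal.ofReal (Θ t ω * X t ω)) ≠ ⊤)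
    (hRV : RegVarying
      (fun x : ℝ =>
        (P {ω | ENNReal.ofReal x < ∑' t : ℕ, ENNReal.ofReal (Θ t ω * X t ω)}).toReal)
      (-α))
    (hRW : RWConditions P Θ α) :
    Tendsto (fun x : ℝ =>
        (∑' t : ℕ, P {ω | x < Θ t ω * X t ω}).toReal /
          (P {ω | ENNReal.ofReal x < ∑' t : ℕ, ENNReal.ofReal (Θ t ω * X t ω)}).toReal)
      atTop (nhds 1) := by
  obtain ⟨p, β, γ, hp, hγ0, hγα, hαβ, hβp, hsum⟩ := hRW.exists_exponents hΘmeas hΘpos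
  have hp0 : 0 < p := by linarith
  set m : ℕ → ℝ≥0∞ := fun t => ∫⁻ ω, potterWeight β γ (Θ t ω) ∂P with hm
  have hmt : ∀ t, m t ≠ ⊤ := fun t ht => by
    have := ENNReal.ne_top_of_tsum_ne_top hsum t
    change m t ^ (1 / p) ≠ ⊤ at this
    rw [ht, ENNReal.top_rpow_of_pos (by positivity)] at this
    exact this rfl
  set F : ℝ → ℝ≥0∞ := fun y => P {ω | y < X 0 ω} with hFdef
  have hF : ∀ t y, P {ω | y < X t ω} = F y := fun t y =>
    (hident t).measure_mem_eq (measurableSet_Ioi (a := y))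
  set G : ℝ → ℝ≥0∞ := fun x =>
    P {ω | ENNReal.ofReal x < ∑' t : ℕ, ENNReal.ofReal (Θ t ω * X t ω)} with hGdef
  change RegVarying (fun x => (G x).toReal) (-α) at hRV
  have hGanti : Antitone G := fun a b hab => by
    have hsub : {ω | ENNReal.ofReal b < ∑' t : ℕ, ENNReal.ofReal (Θ t ω * X t ω)} ⊆
        {ω | ENNReal.ofReal a < ∑' t : ℕ, ENNReal.ofReal (Θ t ω * X t ω)} :=
      fun ω hω => lt_of_le_of_lt (ENNReal.ofReal_le_ofReal hab) hω
    exact measure_mono hsub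
  have hGt : ∀ x, G x ≠ ⊤ := fun x => measure_ne_top _ _
  have hG0 : ∀ x, 0 < x → G x ≠ 0 := fun x hx h0 => by
    have := hRV.1 x hx
    simp [h0] at this
  have hlt : ∀ (t : ℕ) (x : ℝ), 0 ≤ x →
      {ω | ENNReal.ofReal x < ENNReal.ofReal (Θ t ω * X t ω)} = {ω | x < Θ t ω * X t ω} :=
    fun t x hx => Set.ext fun ω => ENNReal.ofReal_lt_ofReal_iff_of_nonneg hx
  have hind : ∀ t, IndepFun (Θ t) (X t) P := fun t =>
    hindep.comp (measurable_pi_apply t) (measurable_pi_apply t)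
  obtain ⟨c, hc, hq⟩ := exists_pos_measure_lt_ne_zero (hΘpos 0)
  have hFG : ∀ y, 0 < y → P {ω | c < Θ 0 ω} * F y ≤ G (c * y) := fun y hy => by
    have h1 : P ({ω | c < Θ 0 ω} ∩ {ω | y < X 0 ω}) = P {ω | c < Θ 0 ω} * F y :=
      (hind 0).measure_inter_preimage_eq_mul _ _ (measurableSet_Ioi (a := c))
        (measurableSet_Ioi (a := y))
    rw [← h1]
    refine measure_mono fun ω hω => ?_
    have hω1 : c < Θ 0 ω := hω.1
    have hω2 : y < X 0 ω := hω.2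
    have h2 : c * y < Θ 0 ω * X 0 ω := by nlinarith
    exact ((ENNReal.ofReal_lt_ofReal_iff_of_nonneg (by positivity)).2 h2).trans_le
      (ENNReal.le_tsum (f := fun t => ENNReal.ofReal (Θ t ω * X t ω)) 0)
  obtain ⟨K, x₀, hK, hx₀, hpot⟩ := hRV.exists_tail_le hGanti (fun x => prob_le_one) hγ0 hγα hαβ
    hq (measure_ne_top _ _) hc hFG
  have hmain : Tendsto (fun x =>
      (∑' t, P {ω | ENNReal.ofReal x < ENNReal.ofReal (Θ t ω * X t ω)}) / G x) atTop (𝓝 1) := by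
    refine tendsto_tsum_measure_div_measure_tsum (V := fun t ω => ENNReal.ofReal (Θ t ω * X t ω))
      (fun t => ((hΘmeas t).mul (hXmeas t)).ennreal_ofReal) (fun x => rfl) hRV ?_ hp hsum
      (K := K * ENNReal.ofReal (p / (p - β))) (ENNReal.mul_ne_top hK ENNReal.ofReal_ne_top)
      (x₀ := x₀) ?_
    · intro s t hst
      have hZm : Measurable fun ω => max (Θ s ω) (Θ t ω) := (hΘmeas s).max (hΘmeas t)
      have hWm : Measurable fun ω => min (X s ω) (X t ω) := (hXmeas s).min (hXmeas t)
      have hZW : IndepFun (fun ω => max (Θ s ω) (Θ t ω)) (fun ω => min (X s ω) (X t ω)) P :=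
        hindep.comp (φ := fun u : ℕ → ℝ => max (u s) (u t)) (ψ := fun u : ℕ → ℝ => min (u s) (u t))
          ((measurable_pi_apply s).max (measurable_pi_apply t))
          ((measurable_pi_apply s).min (measurable_pi_apply t))
      have hZpos : ∀ᵐ ω ∂P, 0 < max (Θ s ω) (Θ t ω) := by
        filter_upwards [hΘpos s] with ω hω using lt_max_of_lt_left hω
      have hZmom : ∫⁻ ω, potterWeight β γ (max (Θ s ω) (Θ t ω)) ∂P ≠ ⊤ := by
        have hms : Measurable fun ω => potterWeight β γ (Θ s ω) :=
          (measurable_potterWeight β γ).comp (hΘmeas s)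
        refine ne_top_of_le_ne_top (ENNReal.add_ne_top.2 ⟨hmt s, hmt t⟩) ?_
        rw [hm, ← lintegral_add_left hms]
        refine lintegral_mono fun ω => ?_
        rcases max_choice (Θ s ω) (Θ t ω) with h | h <;> rw [h]
        · exact le_self_add
        · exact le_add_self
      have hWF : ∀ y, P {ω | y < min (X s ω) (X t ω)} ≤ F y := fun y => by
        rw [← hF s y]
        exact measure_mono fun ω (hω : y < min (X s ω) (X t ω)) => (lt_min_iff.1 hω).1
      have hWlim : Tendsto (fun y => P {ω | y < min (X s ω) (X t ω)} / F y) atTop (𝓝 0) := by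
        simpa only [hF] using (hpair s t hst.ne).tendsto_ennreal_div
      have hlim := tendsto_measure_lt_mul_div hZm hWm hZW hZpos hK (fun y => measure_ne_top _ _)
        hG0 hGt hpot hWF hWlim hZmom
      refine tendsto_of_tendsto_of_tendsto_of_le_of_le' tendsto_const_nhds hlim
        (Eventually.of_forall fun _ => zero_le) ?_
      filter_upwards [eventually_ge_atTop 0] with x hx
      refine ENNReal.div_le_div_right (measure_mono_ae ?_) _
      filter_upwards [hXpos s, hXpos t, hZpos] with ω h1 h2 h3 hω
      have hω1 : x < Θ s ω * X s ω := (ENNReal.ofReal_lt_ofReal_iff_of_nonneg hx).1 hω.1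
      have hω2 : x < Θ t ω * X t ω := (ENNReal.ofReal_lt_ofReal_iff_of_nonneg hx).1 hω.2
      change x < max (Θ s ω) (Θ t ω) * min (X s ω) (X t ω)
      rcases min_choice (X s ω) (X t ω) with h | h <;> rw [h]
      · exact hω1.trans_le (by gcongr; exact le_max_left _ _)
      · exact hω2.trans_le (by gcongr; exact le_max_right _ _)
    · intro x hx t
      refine (lintegral_min_mul_rpow_le (hΘmeas t) (hXmeas t) (hind t) (hΘpos t) (hXpos t)
        (hγα.trans hαβ).le hβp hp0 (hx₀.trans_le hx) (M := K * G x) fun y hy => ?_).trans (le_of_eq ?_)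
      · rw [hF, mul_right_comm]
        exact hpot x hx y hy
      · ring
  have hreal := (ENNReal.tendsto_toReal ENNReal.one_ne_top).comp hmain
  rw [ENNReal.toReal_one] at hreal
  refine hreal.congr' ?_
  filter_upwards [eventually_ge_atTop 0] with x hx
  simp only [Function.comp, ENNReal.toReal_div, hlt _ x hx, hGdef]
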